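/- arXiv:2311.09789 — 3 statements merged into one kernel-verified Lean document; each statement's English description precedes it below -/
import Mathlib

section
/- Let σ be a social welfare function satisfying unanimity and independence, where X has at least 3 elements. Then there exists a unique ultrafilter U on V such that for every U ∈ U, all x, y ∈ X and every profile f, if x f(v) y for all v ∈ U then x σ(f) y (Kirman–Sondermann: the map σ ↦ U_σ is well defined and injective). -/
/-- A weak order: asymmetric and negatively transitive. -/
def IsWeakPref {X : Type*} (P : X → X → Prop) : Prop :=
  (∀ x y : X, P x y → ¬ P y x) ∧ ∀ x y z : X, ¬ P x y → ¬ P y z → ¬ P x z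

/-- A profile assigns a weak order to every voter. -/
def IsProf {V X : Type*} (f : V → X → X → Prop) : Prop := ∀ v : V, IsWeakPref (f v)

/-- A collection of subsets of `V` is a filter: upward closed, closed under
binary intersections, and proper. -/
def IsSetFilter {V : Type*} (F : Set (Set V)) : Prop :=
  (∀ A B : Set V, A ⊆ B → A ∈ F → B ∈ F) ∧
  (∀ A B : Set V, A ∈ F → B ∈ F → A ∩ B ∈ F) ∧
  (∅ : Set V) ∉ F

/-- An ultrafilter is a filter with no strictly finer filter. -/
def IsSetUltrafilter {V : Type*} (U : Set (Set V)) : Prop :=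
  IsSetFilter U ∧ ∀ F : Set (Set V), IsSetFilter F → ¬ U ⊂ F

/-- Unanimity: a unanimous preference is respected by the verdict. -/
def Unanimity {V X : Type*} (σ : (V → X → X → Prop) → X → X → Prop) : Prop :=
  ∀ (x y : X) (f : V → X → X → Prop), IsProf f → (∀ v : V, f v x y) → σ f x y

/-- Independence: profiles agreeing on `{x, y}` get verdicts agreeing on `{x, y}`. -/
def Independence {V X : Type*} (σ : (V → X → X → Prop) → X → X → Prop) : Prop :=
  ∀ (x y : X) (f g : V → X → X → Prop), IsProf f → IsProf g →
    (∀ v : V, (f v x y ↔ g v x y) ∧ (f v y x ↔ g v y x)) →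
    ((σ f x y ↔ σ g x y) ∧ (σ f y x ↔ σ g y x))

/-- Dictatorship: a single voter's strict preferences are always followed. -/
def Dictatorial {V X : Type*} (σ : (V → X → X → Prop) → X → X → Prop) : Prop :=
  ∃ v0 : V, ∀ (x y : X) (f : V → X → X → Prop), IsProf f → f v0 x y → σ f x y

/-- The ultrafilter `𝒰` is decisive for `σ`: every coalition in `𝒰` decides the verdict. -/
def Decisive {V X : Type*} (σ : (V → X → X → Prop) → X → X → Prop)
    (𝒰 : Set (Set V)) : Prop :=
  ∀ U ∈ 𝒰, ∀ (x y : X) (f : V → X → X → Prop), IsProf f →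
    (∀ v ∈ U, f v x y) → σ f x y

/-!
Call a coalition decisive if society follows it on every pair on which it is unanimous. By the
contagion argument of Arrow's theorem, a coalition that prevails once against the opposition of
everybody else, on a single pair of alternatives, is decisive. Now let `B` be decisive, let `A` be
any coalition, and consider a profile in which `A` prefers `b` to `a` and all others `a` to `b`, in
which `B` prefers `c` to `b`, and in which `A ∩ B` prefers `c` to `a` and all others `a` to `c`.
Society prefers `c` to `b`, hence `a` to `b` or `c` to `a`, so one of `Aᶜ` and `A ∩ B` has prevailed
against everybody else. Together with the fact that `A` and `Aᶜ` are never both decisive, this makes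
the decisive coalitions an ultrafilter. Any other decisive ultrafilter is contained in it, hence
equal to it by maximality.
-/

namespace IsWeakPref

variable {X : Type*} {P : X → X → Prop}

theorem cotrans (hP : IsWeakPref P) {x z : X} (hxz : P x z) (y : X) : P x y ∨ P y z := by
  by_contra! h
  exact hP.2 x y z h.1 h.2 hxz

theorem trans (hP : IsWeakPref P) {x y z : X} (hxy : P x y) (hyz : P y z) : P x z :=
  (hP.cotrans hxy z).resolve_right (hP.1 y z hyz)

theorem exists_rank_pair (hP : IsWeakPref P) (x y : X) :
    ∃ m n : ℕ, (P x y ↔ m < n) ∧ (P y x ↔ n < m) := by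
  by_cases hxy : P x y
  · exact ⟨0, 1, by simp [hxy], by simp [hP.1 x y hxy]⟩
  by_cases hyx : P y x
  · exact ⟨1, 0, by simp [hxy], by simp [hyx]⟩
  · exact ⟨0, 0, by simp [hxy], by simp [hyx]⟩

end IsWeakPref

theorem exists_ne_ne_of_three {X : Type*} (hX : ∃ a b c : X, a ≠ b ∧ a ≠ c ∧ b ≠ c) (x y : X) :
    ∃ z, z ≠ x ∧ z ≠ y := by
  obtain ⟨a, b, c, hab, hac, hbc⟩ := hX
  by_contra! h
  have hcover : ∀ z, z = x ∨ z = y := fun z => or_iff_not_imp_left.2 (h z)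
  grind [hcover a, hcover b, hcover c]

theorem nontrivial_of_three {X : Type*} (hX : ∃ a b c : X, a ≠ b ∧ a ≠ c ∧ b ≠ c) :
    Nontrivial X :=
  let ⟨a, b, _, hab, _⟩ := hX
  ⟨a, b, hab⟩

section Profiles

variable {V X α : Type*}

/-- The profile in which every voter `v` orders the alternatives by their rank `u v`, higher ranks
being preferred. -/
def rankProfile [LT α] (u : V → X → α) : V → X → X → Prop := fun v x y => u v x < u v y

theorem isProf_rankProfile [LinearOrder α] (u : V → X → α) : IsProf (rankProfile u) := fun _ =>
  ⟨fun _ _ => lt_asymm, fun _ _ _ hxy hyz => not_lt.2 ((not_lt.1 hyz).trans (not_lt.1 hxy))⟩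

theorem exists_rank_triple {x y z : X} (hxy : x ≠ y) (hxz : x ≠ z) (hyz : y ≠ z) (p q r : V → α) :
    ∃ u : V → X → α, ∀ v, u v x = p v ∧ u v y = q v ∧ u v z = r v := by
  classical
  exact ⟨fun v => Function.update (Function.update (fun _ => r v) y (q v)) x (p v), fun v => by
    simp [hxy.symm, hxz.symm, hyz.symm]⟩

end Profiles

section DecisiveCoalitions

variable {V X : Type*} {σ : (V → X → X → Prop) → X → X → Prop} {A B : Set V} {x y z : X}

/-- The social welfare functions of Arrow's theorem. -/
structure IsArrovian (σ : (V → X → X → Prop) → X → X → Prop) : Prop where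
  isWeakPref : ∀ f : V → X → X → Prop, IsProf f → IsWeakPref (σ f)
  unanimity : Unanimity σ
  independence : Independence σ

/-- Local decisiveness: society prefers `y` to `x` whenever all members of `A` do. -/
def IsDecisiveOn (σ : (V → X → X → Prop) → X → X → Prop) (A : Set V) (x y : X) : Prop :=
  ∀ f : V → X → X → Prop, IsProf f → (∀ v ∈ A, f v x y) → σ f x y

/-- Almost decisiveness: society prefers `y` to `x` whenever all members of `A` do and all other
voters have the opposite strict preference. -/
def IsAlmostDecisiveOn (σ : (V → X → X → Prop) → X → X → Prop) (A : Set V) (x y : X) : Prop :=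
  ∀ f : V → X → X → Prop, IsProf f → (∀ v ∈ A, f v x y) → (∀ v ∉ A, f v y x) → σ f x y

/-- The coalitions that are decisive on every pair of alternatives; under Arrow's conditions they
form the ultrafilter of Kirman and Sondermann. Pairs `(x, x)` are included, to match `Decisive`. -/
def decisiveCoalitions (σ : (V → X → X → Prop) → X → X → Prop) : Set (Set V) :=
  {A | ∀ x y, IsDecisiveOn σ A x y}

theorem decisive_iff_subset_decisiveCoalitions {𝒰 : Set (Set V)} :
    Decisive σ 𝒰 ↔ 𝒰 ⊆ decisiveCoalitions σ :=
  Iff.rfl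

theorem IsDecisiveOn.isAlmostDecisiveOn (h : IsDecisiveOn σ A x y) : IsAlmostDecisiveOn σ A x y :=
  fun f hf hA _ => h f hf hA

theorem Independence.isAlmostDecisiveOn (hI : Independence σ) {f : V → X → X → Prop}
    (hf : IsProf f) (hA : ∀ v ∈ A, f v x y) (hAc : ∀ v ∉ A, f v y x) (hσf : σ f x y) :
    IsAlmostDecisiveOn σ A x y := by
  intro g hg hgA hgAc
  refine (hI x y f g hf hg fun v => ?_).1.1 hσf
  by_cases hv : v ∈ A
  · exact ⟨iff_of_true (hA v hv) (hgA v hv),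
      iff_of_false ((hf v).1 x y (hA v hv)) ((hg v).1 x y (hgA v hv))⟩
  · exact ⟨iff_of_false ((hf v).1 y x (hAc v hv)) ((hg v).1 y x (hgAc v hv)),
      iff_of_true (hAc v hv) (hgAc v hv)⟩

theorem univ_mem_decisiveCoalitions (hU : Unanimity σ) : Set.univ ∈ decisiveCoalitions σ :=
  fun x y f hf h => hU x y f hf fun v => h v (Set.mem_univ v)

theorem mem_decisiveCoalitions_mono (hAB : A ⊆ B) (hA : A ∈ decisiveCoalitions σ) :
    B ∈ decisiveCoalitions σ :=
  fun x y f hf h => hA x y f hf fun v hv => h v (hAB hv)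

theorem compl_notMem_decisiveCoalitions [Nontrivial X]
    (hW : ∀ f : V → X → X → Prop, IsProf f → IsWeakPref (σ f)) (hA : A ∈ decisiveCoalitions σ) :
    Aᶜ ∉ decisiveCoalitions σ := by
  classical
  intro hAc
  obtain ⟨x, y, hxy⟩ := exists_pair_ne X
  let u : V → X → ℕ := fun v a => if a = x then 1 else if v ∈ A then 2 else 0
  have hf := isProf_rankProfile u
  have hσxy : σ (rankProfile u) x y :=
    hA x y _ hf fun v hv => by simp [rankProfile, u, hxy.symm, hv]
  have hσyx : σ (rankProfile u) y x :=
    hAc y x _ hf fun v hv => by simpa [rankProfile, u, hxy.symm] using hv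
  exact (hW _ hf).1 x y hσxy hσyx

theorem mem_decisiveCoalitions_of_forall_ne [Nontrivial X]
    (hW : ∀ f : V → X → X → Prop, IsProf f → IsWeakPref (σ f))
    (h : ∀ x y, x ≠ y → IsDecisiveOn σ A x y) : A ∈ decisiveCoalitions σ := by
  have hA : A.Nonempty := by
    by_contra! hA
    subst hA
    obtain ⟨x, y, hxy⟩ := exists_pair_ne X
    have hf : IsProf (rankProfile fun (_ : V) (_ : X) => 0) := isProf_rankProfile _
    exact (hW _ hf).1 x y (h x y hxy _ hf (by simp)) (h y x hxy.symm _ hf (by simp))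
  obtain ⟨v, hv⟩ := hA
  intro x y f hf hfA
  have hxy : x ≠ y := by
    rintro rfl
    exact (hf v).1 x x (hfA v hv) (hfA v hv)
  exact h x y hxy f hf hfA

namespace IsArrovian

theorem isDecisiveOn_replace_right (hσ : IsArrovian σ) (hxy : x ≠ y) (hzx : z ≠ x) (hzy : z ≠ y)
    (h : IsAlmostDecisiveOn σ A x y) : IsDecisiveOn σ A x z := by
  classical
  intro f hf hfA
  choose m n hmn hnm using fun v => (hf v).exists_rank_pair x z
  -- Insert `y` into `f` just above `x` for members of `A`, at the bottom for others.
  obtain ⟨u, hu⟩ := exists_rank_triple hxy hzx.symm hzy.symm (fun v => 2 * m v + 1)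
    (fun v => if v ∈ A then 2 * m v + 2 else 0) (fun v => 2 * n v + 1)
  have hg := isProf_rankProfile u
  have hσxy : σ (rankProfile u) x y :=
    h _ hg (fun v hv => by grind [rankProfile]) (fun v hv => by grind [rankProfile])
  have hσyz : σ (rankProfile u) y z := hσ.unanimity y z _ hg fun v => by grind [rankProfile]
  have hagree : ∀ v, (rankProfile u v x z ↔ f v x z) ∧ (rankProfile u v z x ↔ f v z x) :=
    fun v => by grind [rankProfile]
  exact (hσ.independence x z _ f hg hf hagree).1.1 ((hσ.isWeakPref _ hg).trans hσxy hσyz)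

theorem isDecisiveOn_replace_left (hσ : IsArrovian σ) (hxy : x ≠ y) (hzx : z ≠ x) (hzy : z ≠ y)
    (h : IsAlmostDecisiveOn σ A x y) : IsDecisiveOn σ A z y := by
  classical
  intro f hf hfA
  choose m n hmn hnm using fun v => (hf v).exists_rank_pair z y
  -- Insert `x` into `f` just above `z` for members of `A`, at the top for others.
  obtain ⟨u, hu⟩ := exists_rank_triple hzx hzy hxy (fun v => 2 * m v)
    (fun v => if v ∈ A then 2 * m v + 1 else 2 * m v + 2 * n v + 1) (fun v => 2 * n v)
  have hg := isProf_rankProfile u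
  have hσzx : σ (rankProfile u) z x := hσ.unanimity z x _ hg fun v => by grind [rankProfile]
  have hσxy : σ (rankProfile u) x y :=
    h _ hg (fun v hv => by grind [rankProfile]) (fun v hv => by grind [rankProfile])
  have hagree : ∀ v, (rankProfile u v z y ↔ f v z y) ∧ (rankProfile u v y z ↔ f v y z) :=
    fun v => by grind [rankProfile]
  exact (hσ.independence z y _ f hg hf hagree).1.1 ((hσ.isWeakPref _ hg).trans hσzx hσxy)

theorem isDecisiveOn_replace_right_of_three (hσ : IsArrovian σ)
    (hX : ∃ a b c : X, a ≠ b ∧ a ≠ c ∧ b ≠ c) (hxy : x ≠ y) (hzx : z ≠ x)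
    (h : IsAlmostDecisiveOn σ A x y) : IsDecisiveOn σ A x z := by
  rcases eq_or_ne z y with rfl | hzy
  · obtain ⟨t, htx, htz⟩ := exists_ne_ne_of_three hX x z
    exact hσ.isDecisiveOn_replace_right htx.symm hzx htz.symm
      (hσ.isDecisiveOn_replace_right hxy htx htz h).isAlmostDecisiveOn
  · exact hσ.isDecisiveOn_replace_right hxy hzx hzy h

theorem mem_decisiveCoalitions_of_isAlmostDecisiveOn (hσ : IsArrovian σ)
    (hX : ∃ a b c : X, a ≠ b ∧ a ≠ c ∧ b ≠ c) (hxy : x ≠ y) (h : IsAlmostDecisiveOn σ A x y) :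
    A ∈ decisiveCoalitions σ := by
  have := nontrivial_of_three hX
  have avoiding_x : ∀ s t, s ≠ t → t ≠ x → IsDecisiveOn σ A s t := by
    intro s t hst htx
    have hxt : IsDecisiveOn σ A x t := hσ.isDecisiveOn_replace_right_of_three hX hxy htx h
    rcases eq_or_ne s x with rfl | hsx
    · exact hxt
    · exact hσ.isDecisiveOn_replace_left htx.symm hsx hst hxt.isAlmostDecisiveOn
  refine mem_decisiveCoalitions_of_forall_ne hσ.isWeakPref fun s t hst => ?_
  obtain ⟨r, hrs, hrx⟩ := exists_ne_ne_of_three hX s x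
  exact hσ.isDecisiveOn_replace_right_of_three hX hrs.symm hst.symm
    (avoiding_x s r hrs.symm hrx).isAlmostDecisiveOn

theorem compl_mem_or_inter_mem_decisiveCoalitions (hσ : IsArrovian σ)
    (hX : ∃ a b c : X, a ≠ b ∧ a ≠ c ∧ b ≠ c) (A : Set V) (hB : B ∈ decisiveCoalitions σ) :
    Aᶜ ∈ decisiveCoalitions σ ∨ A ∩ B ∈ decisiveCoalitions σ := by
  classical
  obtain ⟨a, b, c, hab, hac, hbc⟩ := id hX
  obtain ⟨u, hu⟩ := exists_rank_triple hab hac hbc (fun _ : V => 2)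
    (fun v => if v ∈ A then 3 else 0) (fun v => if v ∈ A ∩ B then 4 else 1)
  have hf := isProf_rankProfile u
  have hσbc : σ (rankProfile u) b c := hB b c _ hf fun v hv => by grind [rankProfile]
  rcases (hσ.isWeakPref _ hf).cotrans hσbc a with hσba | hσac
  · exact .inl <| hσ.mem_decisiveCoalitions_of_isAlmostDecisiveOn hX hab.symm <|
      hσ.independence.isAlmostDecisiveOn hf
        (fun v hv => by grind [rankProfile]) (fun v hv => by grind [rankProfile]) hσba
  · exact .inr <| hσ.mem_decisiveCoalitions_of_isAlmostDecisiveOn hX hac <|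
      hσ.independence.isAlmostDecisiveOn hf
        (fun v hv => by grind [rankProfile]) (fun v hv => by grind [rankProfile]) hσac

theorem isSetFilter_decisiveCoalitions (hσ : IsArrovian σ)
    (hX : ∃ a b c : X, a ≠ b ∧ a ≠ c ∧ b ≠ c) : IsSetFilter (decisiveCoalitions σ) := by
  have := nontrivial_of_three hX
  refine ⟨fun _ _ => mem_decisiveCoalitions_mono, fun A B hA hB => ?_, ?_⟩
  · exact (hσ.compl_mem_or_inter_mem_decisiveCoalitions hX A hB).resolve_left
      (compl_notMem_decisiveCoalitions hσ.isWeakPref hA)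
  · simpa using compl_notMem_decisiveCoalitions hσ.isWeakPref
      (univ_mem_decisiveCoalitions hσ.unanimity)

theorem mem_or_compl_mem_decisiveCoalitions (hσ : IsArrovian σ)
    (hX : ∃ a b c : X, a ≠ b ∧ a ≠ c ∧ b ≠ c) (A : Set V) :
    A ∈ decisiveCoalitions σ ∨ Aᶜ ∈ decisiveCoalitions σ := by
  simpa using (hσ.compl_mem_or_inter_mem_decisiveCoalitions hX A
    (univ_mem_decisiveCoalitions hσ.unanimity)).symm

end IsArrovian

end DecisiveCoalitions

section SetUltrafilters

variable {V : Type*} {F U : Set (Set V)}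

theorem IsSetFilter.isSetUltrafilter (hF : IsSetFilter F) (h : ∀ A, A ∈ F ∨ Aᶜ ∈ F) :
    IsSetUltrafilter F := by
  refine ⟨hF, fun G hG hFG => ?_⟩
  obtain ⟨A, hAG, hAF⟩ := Set.exists_of_ssubset hFG
  have hAcG : Aᶜ ∈ G := hFG.subset ((h A).resolve_left hAF)
  exact hG.2.2 (Set.inter_compl_self A ▸ hG.2.1 A Aᶜ hAG hAcG)

theorem IsSetUltrafilter.eq_of_subset (hU : IsSetUltrafilter U) (hF : IsSetFilter F)
    (hUF : U ⊆ F) : U = F :=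
  hUF.eq_of_not_ssubset (hU.2 F hF)

end SetUltrafilters

/-- Kirman–Sondermann: for every social welfare function satisfying
unanimity and independence there is a unique decisive ultrafilter. -/
theorem exists_unique_decisive_ultrafilter {V X : Type*}
    (hX : ∃ a b c : X, a ≠ b ∧ a ≠ c ∧ b ≠ c)
    (σ : (V → X → X → Prop) → X → X → Prop)
    (hW : ∀ f : V → X → X → Prop, IsProf f → IsWeakPref (σ f))
    (hU : Unanimity σ) (hI : Independence σ) :
    ∃! 𝒰 : Set (Set V), IsSetUltrafilter 𝒰 ∧ Decisive σ 𝒰 := by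
  have hσ : IsArrovian σ := ⟨hW, hU, hI⟩
  have hF : IsSetFilter (decisiveCoalitions σ) := hσ.isSetFilter_decisiveCoalitions hX
  refine ⟨decisiveCoalitions σ, ⟨?_, decisive_iff_subset_decisiveCoalitions.2 subset_rfl⟩, ?_⟩
  · exact hF.isSetUltrafilter (hσ.mem_or_compl_mem_decisiveCoalitions hX)
  · rintro 𝒰 ⟨h𝒰, hdec⟩
    exact h𝒰.eq_of_subset hF (decisive_iff_subset_decisiveCoalitions.1 hdec)
end

section
/- Let σ be a social welfare function satisfying unanimity and independence with X having at least 3 elements, and let U be an ultrafilter on V that is decisive for σ (for every U ∈ U, all x, y ∈ X and every profile f, if x f(v) y for all v ∈ U then x σ(f) y). Then σ is non-dictatorial if and only if U is free, i.e. ⋂U = ∅. -/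
/-!
Call a coalition decisive if its common strict preferences are always socially followed, so that a
dictator is a decisive singleton. Two decisive coalitions must meet: if they were disjoint, one
could rank `x` below `y` and the other `y` below `x`, and the verdict would not be asymmetric. Hence
a dictator belongs to every member of a decisive family. Conversely, by maximality an ultrafilter
with a common point `v` is the principal one, so it contains `{v}`, and decisiveness makes `v` a
dictator.
-/

section SetFilter

variable {V : Type*}

theorem isSetFilter_setOf_mem (v : V) : IsSetFilter {A : Set V | v ∈ A} :=
  ⟨fun _ _ hAB hA => hAB hA, fun _ _ hA hB => ⟨hA, hB⟩, Set.notMem_empty v⟩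

theorem IsSetUltrafilter.eq_of_subset_s8 {𝒰 F : Set (Set V)} (h𝒰 : IsSetUltrafilter 𝒰)
    (hF : IsSetFilter F) (hsub : 𝒰 ⊆ F) : 𝒰 = F :=
  eq_of_subset_of_not_ssubset hsub (h𝒰.2 F hF)

theorem IsSetUltrafilter.singleton_mem_of_mem_sInter {𝒰 : Set (Set V)}
    (h𝒰 : IsSetUltrafilter 𝒰) {v : V} (hv : v ∈ ⋂₀ 𝒰) : {v} ∈ 𝒰 := by
  have h_principal : 𝒰 = {A : Set V | v ∈ A} :=
    h𝒰.eq_of_subset_s8 (isSetFilter_setOf_mem v) hv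
  rw [h_principal]
  exact Set.mem_singleton v

end SetFilter

section Profile

variable {V X : Type*}

theorem isWeakPref_notMem_and_mem (T : Set X) : IsWeakPref fun x y => x ∉ T ∧ y ∈ T :=
  ⟨fun _ _ hxy hyx => hyx.1 hxy.2, fun _ _ _ hxy hyz hxz =>
    hyz ⟨fun hy => hxy ⟨hxz.1, hy⟩, hxz.2⟩⟩

theorem exists_isProf_opposed (A : Set V) {x y : X} (hxy : x ≠ y) :
    ∃ f : V → X → X → Prop, IsProf f ∧ (∀ v ∈ A, f v x y) ∧ ∀ v ∉ A, f v y x := by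
  classical
  let top (v : V) : Set X := if v ∈ A then {y} else {x}
  refine ⟨fun v a b => a ∉ top v ∧ b ∈ top v,
    fun v => isWeakPref_notMem_and_mem (top v), fun v hv => ?_, fun v hv => ?_⟩
  · simp [top, hv, hxy]
  · simp [top, hv, hxy.symm]

end Profile

/-- A coalition `A` is decisive for `σ` if the verdict follows every strict preference shared by all
members of `A`, whatever the other voters prefer. `Decisive σ 𝒰` says that this holds for every
member of `𝒰`. -/
def IsDecisiveCoalition {V X : Type*} (σ : (V → X → X → Prop) → X → X → Prop) (A : Set V) : Prop :=
  ∀ (x y : X) (f : V → X → X → Prop), IsProf f → (∀ v ∈ A, f v x y) → σ f x y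

section Decisive

variable {V X : Type*} {σ : (V → X → X → Prop) → X → X → Prop} {𝒰 : Set (Set V)}

theorem dictatorial_iff_exists_isDecisiveCoalition_singleton :
    Dictatorial σ ↔ ∃ v : V, IsDecisiveCoalition σ {v} := by
  simp only [Dictatorial, IsDecisiveCoalition, Set.mem_singleton_iff, forall_eq]

theorem IsDecisiveCoalition.inter_nonempty [Nontrivial X]
    (hσ : ∀ f : V → X → X → Prop, IsProf f → ∀ x y : X, σ f x y → ¬ σ f y x)
    {A B : Set V} (hA : IsDecisiveCoalition σ A) (hB : IsDecisiveCoalition σ B) :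
    (A ∩ B).Nonempty := by
  by_contra h_empty
  have h_disjoint : Disjoint A B :=
    Set.disjoint_iff_inter_eq_empty.mpr (Set.not_nonempty_iff_eq_empty.mp h_empty)
  obtain ⟨x, y, hxy⟩ := exists_pair_ne X
  obtain ⟨f, hf, hfA, hfB⟩ := exists_isProf_opposed A hxy
  exact hσ f hf x y (hA x y f hf hfA)
    (hB y x f hf fun v hv => hfB v (h_disjoint.notMem_of_mem_right hv))

theorem Decisive.isDecisiveCoalition_singleton_iff [Nontrivial X] (hD : Decisive σ 𝒰)
    (hσ : ∀ f : V → X → X → Prop, IsProf f → ∀ x y : X, σ f x y → ¬ σ f y x)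
    (h𝒰 : IsSetUltrafilter 𝒰) {v : V} : IsDecisiveCoalition σ {v} ↔ v ∈ ⋂₀ 𝒰 where
  mp hv U hU := Set.singleton_inter_nonempty.mp (hv.inter_nonempty hσ (hD U hU))
  mpr hv := hD {v} (h𝒰.singleton_mem_of_mem_sInter hv)

theorem nondictatorial_iff_free_general [Nontrivial X]
    (hσ : ∀ f : V → X → X → Prop, IsProf f → ∀ x y : X, σ f x y → ¬ σ f y x)
    (h𝒰 : IsSetUltrafilter 𝒰) (hD : Decisive σ 𝒰) :
    ¬ Dictatorial σ ↔ ⋂₀ 𝒰 = ∅ := by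
  have h_dictator : Dictatorial σ ↔ (⋂₀ 𝒰).Nonempty :=
    dictatorial_iff_exists_isDecisiveCoalition_singleton.trans
      (exists_congr fun _ => hD.isDecisiveCoalition_singleton_iff hσ h𝒰)
  rw [h_dictator, Set.not_nonempty_iff_eq_empty]

end Decisive

/-- Kirman–Sondermann: a social welfare function with a decisive
ultrafilter is non-dictatorial iff that ultrafilter is free. -/
theorem nondictatorial_iff_free {V X : Type*}
    (hX : ∃ a b c : X, a ≠ b ∧ a ≠ c ∧ b ≠ c)
    (σ : (V → X → X → Prop) → X → X → Prop)
    (hW : ∀ f : V → X → X → Prop, IsProf f → IsWeakPref (σ f))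
    (hU : Unanimity σ) (hI : Independence σ)
    (𝒰 : Set (Set V)) (h𝒰 : IsSetUltrafilter 𝒰) (hD : Decisive σ 𝒰) :
    ¬ Dictatorial σ ↔ ⋂₀ 𝒰 = ∅ := by
  have : Nontrivial X := let ⟨a, b, _, hab, _⟩ := hX; ⟨a, b, hab⟩
  exact nondictatorial_iff_free_general (fun f hf => (hW f hf).1) h𝒰 hD
end

section
/- (Fishburn's Possibility Theorem) Let V be an infinite set of voters and X a set of alternatives with at least 3 elements. Then there exists a social welfare function σ satisfying unanimity and independence that is not dictatorial. -/
/-!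
Let a non-principal ultrafilter on the voters decide: `y` is socially preferred to `x` when almost
every voter prefers `y` to `x`. Being ultrafilter-large commutes with the logical connectives, so
the verdict inherits the axioms of a weak order from the voters. A dictator `v₀` would have to win
even when every other voter is indifferent, which puts `{v₀}` in the ultrafilter.
-/

section FilterRule

variable {V X : Type*}

/-- The aggregation rule of a filter on the voters: the society prefers `y` to `x` when the set of
voters who do belongs to the filter. -/
def filterRule (F : Filter V) (f : V → X → X → Prop) (x y : X) : Prop :=
  ∀ᶠ v in F, f v x y

theorem unanimity_filterRule (F : Filter V) : Unanimity (filterRule (X := X) F) :=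
  fun _ _ _ _ h => Filter.Eventually.of_forall h

theorem independence_filterRule (F : Filter V) : Independence (filterRule (X := X) F) :=
  fun _ _ _ _ _ _ h =>
    ⟨Filter.eventually_congr (.of_forall fun v => (h v).1),
      Filter.eventually_congr (.of_forall fun v => (h v).2)⟩

theorem IsProf.not_filterRule_symm {F : Filter V} [F.NeBot] {f : V → X → X → Prop}
    (hf : IsProf f) {x y : X} (hxy : filterRule F f x y) : ¬ filterRule F f y x := by
  intro hyx
  obtain ⟨v, hv_xy, hv_yx⟩ := (hxy.and hyx).exists
  exact (hf v).1 x y hv_xy hv_yx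

theorem IsProf.not_filterRule_trans {U : Ultrafilter V} {f : V → X → X → Prop}
    (hf : IsProf f) {x y z : X} (hxy : ¬ filterRule U f x y) (hyz : ¬ filterRule U f y z) :
    ¬ filterRule U f x z := by
  rw [filterRule, ← Ultrafilter.eventually_not] at hxy hyz ⊢
  filter_upwards [hxy, hyz] with v hv_xy hv_yz
  exact (hf v).2 x y z hv_xy hv_yz

theorem IsProf.isWeakPref_filterRule {f : V → X → X → Prop} (hf : IsProf f)
    (U : Ultrafilter V) : IsWeakPref (filterRule U f) :=
  ⟨fun _ _ => hf.not_filterRule_symm, fun _ _ _ => hf.not_filterRule_trans⟩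

/-- The profile testing the power of a coalition `A`: its members prefer every alternative outside
`S` to every alternative in `S`, and there are no other strict preferences. -/
def coalitionProfile (A : Set V) (S : Set X) (v : V) (x y : X) : Prop :=
  v ∈ A ∧ x ∈ S ∧ y ∉ S

theorem isProf_coalitionProfile (A : Set V) (S : Set X) : IsProf (coalitionProfile A S) := by
  intro v
  refine ⟨fun x y hxy hyx => hxy.2.2 hyx.2.1, ?_⟩
  rintro x y z hxy hyz ⟨hv, hx, hz⟩
  by_cases hy : y ∈ S
  · exact hyz ⟨hv, hy, hz⟩
  · exact hxy ⟨hv, hx, hy⟩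

theorem filterRule_coalitionProfile_iff {F : Filter V} {A : Set V} {S : Set X} {x y : X}
    (hx : x ∈ S) (hy : y ∉ S) : filterRule F (coalitionProfile A S) x y ↔ A ∈ F := by
  simp [filterRule, coalitionProfile, hx, hy]

theorem dictatorial_filterRule_iff [Nontrivial X] {F : Filter V} :
    Dictatorial (filterRule (X := X) F) ↔ ∃ v, F ≤ pure v := by
  refine exists_congr fun v => ⟨fun hv => ?_, fun hF x y f _ hxy => hF hxy⟩
  obtain ⟨x, y, hxy⟩ := exists_pair_ne X
  have hy : y ∉ ({x} : Set X) := hxy.symm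
  have hverdict : filterRule F (coalitionProfile {v} {x}) x y :=
    hv x y _ (isProf_coalitionProfile {v} {x}) ⟨rfl, rfl, hy⟩
  exact Filter.le_pure_iff.2 <|
    (filterRule_coalitionProfile_iff (Set.mem_singleton x) hy).1 hverdict

theorem not_dictatorial_filterRule_hyperfilter [Infinite V] [Nontrivial X] :
    ¬ Dictatorial (filterRule (X := X) (Filter.hyperfilter V : Filter V)) := by
  rw [dictatorial_filterRule_iff]
  rintro ⟨v, hv⟩
  exact Filter.notMem_hyperfilter_of_finite (Set.finite_singleton v) (Filter.le_pure_iff.1 hv)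

end FilterRule

theorem fishburn_possibility_general {V X : Type*} [Infinite V] [Nontrivial X] :
    ∃ σ : (V → X → X → Prop) → X → X → Prop,
      (∀ f : V → X → X → Prop, IsProf f → IsWeakPref (σ f)) ∧
      Unanimity σ ∧ Independence σ ∧ ¬ Dictatorial σ :=
  ⟨filterRule (Filter.hyperfilter V : Filter V),
    fun _ hf => hf.isWeakPref_filterRule (Filter.hyperfilter V),
    unanimity_filterRule _, independence_filterRule _, not_dictatorial_filterRule_hyperfilter⟩

/-- Fishburn's Possibility Theorem: over an infinite set of voters
there is a non-dictatorial social welfare function satisfying unanimity and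
independence. -/
theorem fishburn_possibility {V X : Type*} [Infinite V]
    (hX : ∃ a b c : X, a ≠ b ∧ a ≠ c ∧ b ≠ c) :
    ∃ σ : (V → X → X → Prop) → X → X → Prop,
      (∀ f : V → X → X → Prop, IsProf f → IsWeakPref (σ f)) ∧
      Unanimity σ ∧ Independence σ ∧ ¬ Dictatorial σ := by
  have : Nontrivial X := let ⟨a, b, _, hab, _⟩ := hX; ⟨a, b, hab⟩
  exact fishburn_possibility_general
end
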